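/- arXiv:0803.3689 — 2 statements merged into one kernel-verified Lean document; each statement's English description precedes it below -/
import Mathlib

section
/- Let Γ = k[x]/(x^a) with a ≥ 2 and the grading |x| = 1. Then the even Hochschild cohomology ring of Γ is HH^{2*}(Γ) ≅ k[x,z]/(x^a, a·x^{a-1}·z), where |x| = (0, 1) and |z| = (2, 0) in the (ℤ ⊕ ℤ)-grading (cohomological degree, internal degree). -/
noncomputable section

open CategoryTheory Abelian MvPolynomial TensorProduct MulOpposite

/-- The truncated polynomial algebra `Γ = k[x]/(x^a)`, graded by `|x| = 1`. -/
abbrev TruncPoly (k : Type) [Field k] (a : ℕ) : Type :=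
  Polynomial k ⧸ (Ideal.span {Polynomial.X ^ a} : Ideal (Polynomial k))

/-- The enveloping algebra `Γᵉ = Γ ⊗[k] Γᵒᵖ`. -/
abbrev TruncEnv (k : Type) [Field k] (a : ℕ) : Type :=
  TruncPoly k a ⊗[k] (TruncPoly k a)ᵐᵒᵖ

/-- The commutative ring `k[x,z]/(x^a, a·x^{a-1}·z)`, with `x = X 0`, `z = X 1`. -/
abbrev HHTarget (k : Type) [Field k] (a : ℕ) : Type :=
  MvPolynomial (Fin 2) k ⧸
    (Ideal.span {(X 0 : MvPolynomial (Fin 2) k) ^ a,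
        (a : MvPolynomial (Fin 2) k) * (X 0) ^ (a - 1) * X 1} :
      Ideal (MvPolynomial (Fin 2) k))

/-- The component of `k[x,z]/(x^a, a·x^{a-1}·z)` of cohomological degree `2j` (i.e.
`z`-degree `j`; the generator `x` has cohomological degree `0` and internal degree `1`,
and `z` has cohomological degree `2` and internal degree `0`): the span of the images of
the monomials `x^i z^j`. -/
def hhTargetDeg (k : Type) [Field k] (a : ℕ) (j : ℕ) : Submodule k (HHTarget k a) :=
  Submodule.span k ((fun i : ℕ => (Ideal.Quotient.mk _
      ((X 0 : MvPolynomial (Fin 2) k) ^ i * (X 1) ^ j) : HHTarget k a)) '' Set.univ)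

/-! Write `Γ = k[x]/(f)` with `f` monic, let `t` be the class of `x`, and identify `Γᵉ` with
`Γ[y]/(f(y))`. Over `Γ` the polynomial `f(y)` factors as `(y - t) W(y)`, and `W(t) = f'(t)`. Both
factors are regular, so their images `u` and `v` in `Γᵉ` annihilate exactly each other's multiples.
Since `Γ = Γᵉ/(u)`, this gives an exact sequence `0 ⟶ Γ ⟶ Γᵉ ⟶ Γᵉ ⟶ Γ ⟶ 0`, the last two maps being
multiplication by `u` and multiplication `μ : Γᵉ → Γ`, and the first sending `1` to `v`. Its Yoneda
class `z ∈ Ext²` makes Ext periodic: every even class is `r • zʲ` for some `r ∈ Γᵉ`. For `j = 0` it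
vanishes iff `μ(r) = 0`. For `j = 1` it vanishes iff the endomorphism `μ(r)` of `Γ` extends along
`Γ ⟶ Γᵉ`, i.e. iff `f'(t) = μ(v)` divides `μ(r)`, and the condition stays the same for `j > 1`
because composition with `z` is injective in positive degrees. These are the relations of
`k[x, z]/(f(x), f'(x) z)`, and `f = xᵃ` gives the truncated polynomial algebra. -/

universe u v w

section ShortExact

variable {C : Type*} [Category* C] [Abelian C] [HasExt.{w} C]
  {S : ShortComplex C} (hS : S.ShortExact) {Y : C} {n m : ℕ}

include hS in
theorem extClass_comp_surjective [Projective S.X₂] (h : 1 + n = m) :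
    Function.Surjective fun x : Ext S.X₁ Y n ↦ hS.extClass.comp x h := fun y ↦ by
  obtain rfl : m = n + 1 := by lia
  exact Ext.contravariant_sequence_exact₃ hS Y y (Ext.eq_zero_of_projective _) h

theorem extClass_comp_eq_zero_iff (h : 1 + n = m) {x : Ext S.X₁ Y n} :
    hS.extClass.comp x h = 0 ↔ ∃ t : Ext S.X₂ Y n, (Ext.mk₀ S.f).comp t (zero_add n) = x := by
  refine ⟨Ext.contravariant_sequence_exact₁ hS Y x h, ?_⟩
  rintro ⟨t, rfl⟩
  exact hS.extClass_comp_assoc t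

theorem extClass_comp_eq_zero_iff_of_pos [Projective S.X₂] (h : 1 + n = m) (hn : 0 < n)
    {x : Ext S.X₁ Y n} : hS.extClass.comp x h = 0 ↔ x = 0 := by
  obtain ⟨n, rfl⟩ := Nat.exists_eq_add_one.2 hn
  refine ⟨fun hx ↦ ?_, fun hx ↦ by rw [hx, Ext.comp_zero]⟩
  obtain ⟨t, rfl⟩ := (extClass_comp_eq_zero_iff hS h).1 hx
  rw [Ext.eq_zero_of_projective t, Ext.comp_zero]

end ShortExact

section Splice

variable {C : Type*} [Category* C] [Abelian C] [HasExt.{w} C] {M K N P Q Y : C}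
  {i : K ⟶ P} {p : P ⟶ M} {j : N ⟶ Q} {q : Q ⟶ K} {hip : i ≫ p = 0} {hjq : j ≫ q = 0}
  (hS : (ShortComplex.mk i p hip).ShortExact) (hT : (ShortComplex.mk j q hjq).ShortExact)
  {n m : ℕ}

/-- The Yoneda class in `Ext² M N` of the exact sequence `0 ⟶ N ⟶ Q ⟶ P ⟶ M ⟶ 0`, which is encoded
as the splice along `K` of two short exact sequences. -/
def spliceClass : Ext M N 2 :=
  hS.extClass.comp hT.extClass one_add_one_eq_two

theorem spliceClass_comp {l : ℕ} (x : Ext N Y n) (h : 2 + n = m) (hl : 1 + n = l) :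
    (spliceClass hS hT).comp x h = hS.extClass.comp (hT.extClass.comp x hl) (by lia) :=
  Ext.comp_assoc _ _ _ _ _ (by lia)

theorem spliceClass_comp_surjective [Projective P] [Projective Q] (h : 2 + n = m) :
    Function.Surjective fun x : Ext N Y n ↦ (spliceClass hS hT).comp x h := by
  simp only [spliceClass_comp hS hT _ h rfl]
  exact (extClass_comp_surjective hS (by lia)).comp (extClass_comp_surjective hT rfl)

theorem spliceClass_comp_eq_zero_iff [Projective P] (h : 2 + n = m) {x : Ext N Y n} :
    (spliceClass hS hT).comp x h = 0 ↔ ∃ t : Ext Q Y n, (Ext.mk₀ j).comp t (zero_add n) = x := by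
  rw [spliceClass_comp hS hT x h rfl, extClass_comp_eq_zero_iff_of_pos hS _ (by lia),
    extClass_comp_eq_zero_iff hT]

theorem spliceClass_comp_eq_zero_iff_of_pos [Projective P] [Projective Q] (h : 2 + n = m)
    (hn : 0 < n) {x : Ext N Y n} : (spliceClass hS hT).comp x h = 0 ↔ x = 0 := by
  rw [spliceClass_comp hS hT x h rfl, extClass_comp_eq_zero_iff_of_pos hS _ (by lia),
    extClass_comp_eq_zero_iff_of_pos hT _ hn]

end Splice

section ExtPow

variable {C : Type*} [Category* C] [Abelian C] [HasExt.{w} C] {M : C} {d : ℕ} (z : Ext M M d)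

/-- The powers of a class `z ∈ Ext^d M M` under Yoneda composition. -/
def extPow : ∀ n : ℕ, Ext M M (d * n)
  | 0 => Ext.mk₀ (𝟙 M)
  | n + 1 => z.comp (extPow n) (by ring)

theorem extPow_comp_extPow (m n : ℕ) {l : ℕ} (h : m + n = l) :
    (extPow z m).comp (extPow z n) (by rw [← h, mul_add]) = extPow z l := by
  induction m generalizing l with
  | zero =>
    obtain rfl : n = l := by lia
    exact Ext.mk₀_id_comp _
  | succ m ih =>
    obtain rfl : m + n + 1 = l := by lia
    simp only [extPow]
    rw [Ext.comp_assoc _ _ _ _ (mul_add d m n).symm (by ring), ih rfl]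

end ExtPow

section Module

variable {R : Type v} [CommRing R] {M N P Q : Type v} [AddCommGroup M] [Module R M]
  [AddCommGroup N] [Module R N] [AddCommGroup P] [Module R P] [AddCommGroup Q] [Module R Q]
  {ι : N →ₗ[R] Q} {δ : Q →ₗ[R] P} {π : P →ₗ[R] M}

theorem shortExact_range_subtype (hδπ : Function.Exact δ π) (hπ : Function.Surjective π) :
    (ShortComplex.mk (ModuleCat.ofHom δ.range.subtype) (ModuleCat.ofHom π)
      (by ext ⟨_, x, rfl⟩; exact hδπ.apply_apply_eq_zero x)).ShortExact :=
  ModuleCat.shortComplex_shortExact _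
    (fun x ↦ (hδπ x).trans (by simp)) δ.range.injective_subtype hπ

theorem shortExact_rangeRestrict (hι : Function.Injective ι) (hιδ : Function.Exact ι δ) :
    (ShortComplex.mk (ModuleCat.ofHom ι) (ModuleCat.ofHom δ.rangeRestrict)
      (by ext x; exact hιδ.apply_apply_eq_zero x)).ShortExact :=
  ModuleCat.shortComplex_shortExact _
    (fun x ↦ Subtype.ext_iff.trans (hιδ x)) hι δ.surjective_rangeRestrict

end Module

section Cyclic

variable {R : Type v} [CommRing R] {M : Type v} [AddCommGroup M] [Module R M]
  {ι : M →ₗ[R] R} {δ : R →ₗ[R] R} {π : R →ₗ[R] M}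
  (hι : Function.Injective ι) (hιδ : Function.Exact ι δ) (hδπ : Function.Exact δ π)
  (hπ : Function.Surjective π)

include hπ in
theorem hom_eq_smul_id_iff {g : ModuleCat.of R M ⟶ ModuleCat.of R M} {r : R} :
    g = r • 𝟙 (ModuleCat.of R M) ↔ g (π 1) = π r := by
  have hr : π r = r • π 1 := by rw [← map_smul, smul_eq_mul, mul_one]
  refine ⟨fun hg ↦ by rw [hg, hr]; rfl, fun hg ↦ ?_⟩
  ext x
  obtain ⟨s, rfl⟩ := hπ x
  have hs : π s = s • π 1 := by rw [← map_smul, smul_eq_mul, mul_one]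
  change g (π s) = r • π s
  rw [hs, map_smul, hg, hr, smul_comm]

variable [HasExt.{w} (ModuleCat.{v} R)]

include hπ in
theorem smul_mk₀_id_surjective :
    Function.Surjective fun r : R ↦ r • Ext.mk₀ (𝟙 (ModuleCat.of R M)) := fun x ↦ by
  obtain ⟨g, rfl⟩ := (Ext.mk₀_bijective _ _).2 x
  obtain ⟨r, hr⟩ := hπ (g (π 1))
  refine ⟨r, ?_⟩
  rw [(hom_eq_smul_id_iff hπ).2 hr.symm, Ext.mk₀_smul]

include hπ in
theorem smul_mk₀_id_eq_zero_iff {r : R} :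
    r • Ext.mk₀ (𝟙 (ModuleCat.of R M)) = 0 ↔ π r = 0 := by
  rw [← Ext.mk₀_smul, Ext.mk₀_eq_zero_iff, eq_comm, hom_eq_smul_id_iff hπ, eq_comm]
  rfl

/-- The class in `Ext² M M` of an exact sequence `0 ⟶ M ⟶ R ⟶ R ⟶ M ⟶ 0` with maps `ι`, `δ`, `π`;
it makes the even self-extensions of `M` periodic. -/
def periodClass : Ext (ModuleCat.of R M) (ModuleCat.of R M) 2 :=
  spliceClass (shortExact_range_subtype hδπ hπ) (shortExact_rangeRestrict hι hιδ)

theorem smul_extPow_periodClass_surjective (j : ℕ) :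
    Function.Surjective fun r : R ↦ r • extPow (periodClass hι hιδ hδπ hπ) j := by
  induction j with
  | zero => exact smul_mk₀_id_surjective hπ
  | succ j ih =>
    intro y
    obtain ⟨x, rfl⟩ := spliceClass_comp_surjective
      (shortExact_range_subtype hδπ hπ) (shortExact_rangeRestrict hι hιδ)
      (show 2 + 2 * j = 2 * (j + 1) by ring) y
    obtain ⟨r, rfl⟩ := ih x
    exact ⟨r, (Ext.comp_smul _ _ _ _).symm⟩

theorem periodClass_comp_smul_id_eq_zero_iff {r : R} :
    (periodClass hι hιδ hδπ hπ).comp (r • Ext.mk₀ (𝟙 (ModuleCat.of R M))) (add_zero 2) = 0 ↔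
      ∃ x, ι (π 1) • x = π r := by
  rw [periodClass, spliceClass_comp_eq_zero_iff, ← Ext.mk₀_smul]
  have hfactor (t : ModuleCat.of R R ⟶ ModuleCat.of R M) :
      (Ext.mk₀ (ModuleCat.ofHom ι)).comp (Ext.mk₀ t) (zero_add 0) = Ext.mk₀ (r • 𝟙 _) ↔
        ι (π 1) • t (1 : R) = π r := by
    rw [Ext.mk₀_comp_mk₀, (Ext.mk₀_bijective _ _).1.eq_iff, hom_eq_smul_id_iff hπ, ← map_smul,
      smul_eq_mul, mul_one]
    rfl
  constructor
  · rintro ⟨t, ht⟩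
    obtain ⟨t, rfl⟩ := (Ext.mk₀_bijective _ _).2 t
    exact ⟨t (1 : R), (hfactor t).1 ht⟩
  · rintro ⟨x, hx⟩
    refine ⟨Ext.mk₀ (ModuleCat.ofHom (LinearMap.toSpanSingleton R M x)), (hfactor _).2 ?_⟩
    simpa using hx

theorem smul_extPow_periodClass_eq_zero_iff (j : ℕ) {r : R} :
    r • extPow (periodClass hι hιδ hδπ hπ) (j + 1) = 0 ↔ ∃ x, ι (π 1) • x = π r := by
  induction j with
  | zero =>
    rw [← periodClass_comp_smul_id_eq_zero_iff hι hιδ hδπ hπ, Ext.comp_smul]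
    rfl
  | succ j ih =>
    rw [← ih, extPow, ← Ext.comp_smul]
    exact spliceClass_comp_eq_zero_iff_of_pos _ _ _ (by lia)

end Cyclic

section ExactPair

/-- `(u, v)` is an exact pair of zero divisors: the annihilators of `u` and `v` are the ideals
`(v)` and `(u)`. -/
structure IsExactPair {R : Type*} [CommRing R] (u v : R) : Prop where
  mul_left_eq_zero_iff : ∀ {r}, u * r = 0 ↔ v ∣ r
  mul_right_eq_zero_iff : ∀ {r}, v * r = 0 ↔ u ∣ r

theorem map_mul_eq_zero_iff_map_dvd {A R : Type*} [CommRing A] [CommRing R] {q : A →+* R}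
    (hq : Function.Surjective q) {f g : A} (hker : ∀ p, q p = 0 ↔ f * g ∣ p) (hf : IsRegular f)
    {r : R} : q f * r = 0 ↔ q g ∣ r := by
  constructor
  · obtain ⟨p, rfl⟩ := hq r
    rw [← map_mul, hker]
    rintro ⟨c, hc⟩
    have hp : p = g * c := hf.left (by simpa only [mul_assoc] using hc)
    exact ⟨q c, by rw [hp, map_mul]⟩
  · rintro ⟨s, rfl⟩
    rw [← mul_assoc, ← map_mul, (hker _).2 dvd_rfl, zero_mul]

theorem isExactPair_map_of_isRegular {A R : Type*} [CommRing A] [CommRing R] {q : A →+* R}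
    (hq : Function.Surjective q) {f g : A} (hker : ∀ p, q p = 0 ↔ f * g ∣ p)
    (hfg : IsRegular (f * g)) : IsExactPair (q f) (q g) where
  mul_left_eq_zero_iff :=
    map_mul_eq_zero_iff_map_dvd hq hker (isRegular_mul_iff.1 hfg).1
  mul_right_eq_zero_iff :=
    map_mul_eq_zero_iff_map_dvd hq (by simpa only [mul_comm g] using hker)
      (isRegular_mul_iff.1 hfg).2

variable {R M : Type*} [CommRing R] [AddCommGroup M] [Module R M] {u v : R} {π : R →ₗ[R] M}

theorem exact_toSpanSingleton (hker : ∀ r, π r = 0 ↔ u ∣ r) :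
    Function.Exact (LinearMap.toSpanSingleton R R u) π := fun r ↦ by
  rw [hker]
  simp [dvd_def, mul_comm, eq_comm]

theorem IsExactPair.exists_injective_exact (h : IsExactPair u v) (hπ : Function.Surjective π)
    (hker : ∀ r, π r = 0 ↔ u ∣ r) :
    ∃ ι : M →ₗ[R] R, Function.Injective ι ∧
      Function.Exact ι (LinearMap.toSpanSingleton R R u) ∧ ι (π 1) = v := by
  have hkv : π.ker = (LinearMap.toSpanSingleton R R v).ker := by
    ext r
    simp [hker, ← h.mul_right_eq_zero_iff, mul_comm]
  let ι : M →ₗ[R] R := π.ker.liftQ (LinearMap.toSpanSingleton R R v) hkv.le ∘ₗ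
    (π.quotKerEquivOfSurjective hπ).symm
  have hιπ (r : R) : ι (π r) = v * r := by
    simp only [ι, LinearMap.comp_apply, LinearEquiv.coe_coe,
      LinearMap.quotKerEquivOfSurjective_symm_apply, Submodule.liftQ_apply,
      LinearMap.toSpanSingleton_apply, smul_eq_mul, mul_comm v]
  refine ⟨ι, (injective_iff_map_eq_zero ι).2 fun x hx ↦ ?_, fun x ↦ ?_, by simp [hιπ]⟩
  · obtain ⟨r, rfl⟩ := hπ x
    rwa [hker, ← h.mul_right_eq_zero_iff, ← hιπ]
  · rw [LinearMap.toSpanSingleton_apply, smul_eq_mul, mul_comm, h.mul_left_eq_zero_iff]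
    constructor
    · rintro ⟨r, rfl⟩
      exact ⟨π r, hιπ r⟩
    · rintro ⟨y, rfl⟩
      obtain ⟨r, rfl⟩ := hπ y
      exact ⟨r, hιπ r⟩

end ExactPair
section BaseChange

variable {R S : Type*} (A : Type*) [CommRing R] [CommRing S] [CommRing A] [Algebra R S]
  [Algebra R A] {f : Polynomial R}

/-- If `S = R[x]/(f)`, then `A ⊗[R] S = A[y]/(f)`, with `y` the image `1 ⊗ x` of `x`. -/
def isAdjoinRootBaseChange (h : IsAdjoinRoot S f) :
    IsAdjoinRoot (A ⊗[R] S) (f.map (algebraMap R A)) :=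
  (AdjoinRoot.isAdjoinRoot _).ofAlgEquiv <| AlgEquiv.ofAlgHom
    (AdjoinRoot.liftAlgHom _ (Algebra.ofId A _) (1 ⊗ₜ h.root) (by
      change Polynomial.aeval (Algebra.TensorProduct.includeRight (R := R) (A := A) h.root) _ = 0
      rw [Polynomial.aeval_map_algebraMap, Polynomial.aeval_algHom_apply, h.aeval_root_self,
        map_zero]))
    (Algebra.TensorProduct.lift (Algebra.ofId A _)
      (h.liftHom (AdjoinRoot.root (f.map (algebraMap R A))) (by
        rw [← Polynomial.aeval_map_algebraMap A, AdjoinRoot.aeval_eq, AdjoinRoot.mk_self]))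
      fun _ _ ↦ Commute.all _ _)
    (by
      apply Algebra.TensorProduct.ext
      · ext
      · refine (AlgHom.cancel_right h.map_surjective).1 (Polynomial.algHom_ext ?_)
        simp)
    (by
      ext
      simp)

theorem isAdjoinRootBaseChange_root (h : IsAdjoinRoot S f) :
    (isAdjoinRootBaseChange A h).root = 1 ⊗ₜ h.root := by
  simp [isAdjoinRootBaseChange]

end BaseChange

section Enveloping

variable {k : Type u} {Γ : Type v} [CommRing k] [CommRing Γ] [Algebra k Γ] {f : Polynomial k}

variable (k Γ) in
/-- The multiplication map `Γᵉ → Γ` of the enveloping algebra of a commutative algebra. -/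
def envMul : Γ ⊗[k] Γᵐᵒᵖ →ₐ[Γ] Γ :=
  Algebra.TensorProduct.lift (AlgHom.id Γ Γ) (AlgEquiv.toOpposite k Γ).symm.toAlgHom
    fun _ _ ↦ Commute.all _ _

theorem envMul_tmul (g h : Γ) : envMul k Γ (g ⊗ₜ op h) = g * h := by
  simp [envMul]

variable (k Γ) in
theorem envMul_surjective : Function.Surjective (envMul k Γ) := fun g ↦
  ⟨g ⊗ₜ op 1, by rw [envMul_tmul, mul_one]⟩

theorem smul_eq_envMul_mul [Module (Γ ⊗[k] Γᵐᵒᵖ) Γ]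
    (hbi : ∀ u v x : Γ, (u ⊗ₜ op v : Γ ⊗[k] Γᵐᵒᵖ) • x = u * x * v) (r : Γ ⊗[k] Γᵐᵒᵖ) (x : Γ) :
    r • x = envMul k Γ r * x := by
  induction r using TensorProduct.induction_on with
  | zero => exact (zero_smul (Γ ⊗[k] Γᵐᵒᵖ) x).trans (by simp)
  | add r s hr hs => rw [add_smul, hr, hs, map_add, add_mul]
  | tmul g h =>
    rw [← op_unop h, hbi, envMul_tmul, mul_right_comm]

/-- The enveloping algebra of `Γ = k[x]/(f)` is `Γ[y]/(f)`, with `y` the image `1 ⊗ x` of `x`. -/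
def envIsAdjoinRoot (h : IsAdjoinRoot Γ f) :
    IsAdjoinRoot (Γ ⊗[k] Γᵐᵒᵖ) (f.map (algebraMap k Γ)) :=
  isAdjoinRootBaseChange Γ (h.ofAlgEquiv (AlgEquiv.toOpposite k Γ))

theorem envMul_map (h : IsAdjoinRoot Γ f) (p : Polynomial Γ) :
    envMul k Γ ((envIsAdjoinRoot h).map p) = p.eval h.root := by
  have hroot : envMul k Γ (envIsAdjoinRoot h).root = h.root := by
    rw [envIsAdjoinRoot, isAdjoinRootBaseChange_root, IsAdjoinRoot.ofAlgEquiv_root]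
    exact (envMul_tmul _ _).trans (one_mul _)
  rw [← IsAdjoinRoot.aeval_root_eq_map, ← Polynomial.aeval_algHom_apply, hroot,
    Polynomial.coe_aeval_eq_eval]

theorem eval_divByMonic_X_sub_C {R : Type*} [CommRing R] {p : Polynomial R} {a : R}
    (h : p.IsRoot a) : (p /ₘ (Polynomial.X - Polynomial.C a)).eval a = p.derivative.eval a := by
  conv_rhs => rw [← Polynomial.mul_divByMonic_eq_iff_isRoot.2 h]
  simp [Polynomial.derivative_mul]

theorem X_sub_C_mul_divByMonic (h : IsAdjoinRoot Γ f) :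
    (Polynomial.X - Polynomial.C h.root) * (f.map (algebraMap k Γ) /ₘ
      (Polynomial.X - Polynomial.C h.root)) = f.map (algebraMap k Γ) :=
  Polynomial.mul_divByMonic_eq_iff_isRoot.2 (by simp [Polynomial.IsRoot])

theorem envMul_eq_zero_iff (h : IsAdjoinRoot Γ f) (r : Γ ⊗[k] Γᵐᵒᵖ) :
    envMul k Γ r = 0 ↔
      (envIsAdjoinRoot h).map (Polynomial.X - Polynomial.C h.root) ∣ r := by
  constructor
  · obtain ⟨p, rfl⟩ := (envIsAdjoinRoot h).map_surjective r
    rw [envMul_map h]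
    exact fun hp ↦ map_dvd _ (Polynomial.dvd_iff_isRoot.2 hp)
  · rintro ⟨s, rfl⟩
    rw [map_mul, envMul_map h]
    simp

theorem isExactPair_envIsAdjoinRoot_map (h : IsAdjoinRootMonic Γ f) :
    IsExactPair ((envIsAdjoinRoot h.toIsAdjoinRoot).map (Polynomial.X - Polynomial.C h.root))
      ((envIsAdjoinRoot h.toIsAdjoinRoot).map (f.map (algebraMap k Γ) /ₘ
        (Polynomial.X - Polynomial.C h.root))) := by
  refine isExactPair_map_of_isRegular (q := (envIsAdjoinRoot h.toIsAdjoinRoot).map.toRingHom)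
    (envIsAdjoinRoot h.toIsAdjoinRoot).map_surjective (fun p ↦ ?_) ?_
  · rw [X_sub_C_mul_divByMonic h.toIsAdjoinRoot]
    exact (envIsAdjoinRoot h.toIsAdjoinRoot).map_eq_zero_iff
  · rw [X_sub_C_mul_divByMonic h.toIsAdjoinRoot]
    exact (h.monic.map _).isRegular

theorem exists_smul_extPow_eq_zero_iff (h : IsAdjoinRootMonic Γ f) [Module (Γ ⊗[k] Γᵐᵒᵖ) Γ]
    (hbi : ∀ u v x : Γ, (u ⊗ₜ op v : Γ ⊗[k] Γᵐᵒᵖ) • x = u * x * v)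
    [HasExt.{w} (ModuleCat.{v} (Γ ⊗[k] Γᵐᵒᵖ))] :
    ∃ z : Ext (ModuleCat.of (Γ ⊗[k] Γᵐᵒᵖ) Γ) (ModuleCat.of (Γ ⊗[k] Γᵐᵒᵖ) Γ) 2,
      (∀ j, Function.Surjective fun r : Γ ⊗[k] Γᵐᵒᵖ ↦ r • extPow z j) ∧
      (∀ r : Γ ⊗[k] Γᵐᵒᵖ, r • extPow z 0 = 0 ↔ envMul k Γ r = 0) ∧
      ∀ (j : ℕ) (r : Γ ⊗[k] Γᵐᵒᵖ), r • extPow z (j + 1) = 0 ↔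
        Polynomial.aeval h.root f.derivative ∣ envMul k Γ r := by
  let π : Γ ⊗[k] Γᵐᵒᵖ →ₗ[Γ ⊗[k] Γᵐᵒᵖ] Γ := LinearMap.toSpanSingleton _ Γ 1
  have hπ_apply (r : Γ ⊗[k] Γᵐᵒᵖ) : π r = envMul k Γ r := by
    rw [LinearMap.toSpanSingleton_apply, smul_eq_envMul_mul hbi, mul_one]
  have hπ : Function.Surjective π := fun g ↦
    (envMul_surjective k Γ g).imp fun r hr ↦ (hπ_apply r).trans hr
  have hker (r : Γ ⊗[k] Γᵐᵒᵖ) : π r = 0 ↔ (envIsAdjoinRoot h.toIsAdjoinRoot).map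
      (Polynomial.X - Polynomial.C h.root) ∣ r := by
    rw [hπ_apply, envMul_eq_zero_iff h.toIsAdjoinRoot]
  obtain ⟨ι, hι, hιδ, hι_one⟩ := (isExactPair_envIsAdjoinRoot_map h).exists_injective_exact hπ hker
  refine ⟨periodClass hι hιδ (exact_toSpanSingleton hker) hπ,
    smul_extPow_periodClass_surjective hι hιδ _ hπ, fun r ↦ ?_, fun j r ↦ ?_⟩
  · rw [← hπ_apply]
    exact smul_mk₀_id_eq_zero_iff hπ
  · have hroot : (f.map (algebraMap k Γ)).IsRoot h.root := by
      simp [Polynomial.IsRoot]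
    rw [smul_extPow_periodClass_eq_zero_iff, hι_one, hπ_apply, dvd_def]
    simp only [smul_eq_envMul_mul hbi, envMul_map, eval_divByMonic_X_sub_C hroot,
      Polynomial.derivative_map, Polynomial.eval_map_algebraMap]
    simp only [eq_comm]

end Enveloping

section Target

theorem C_mul_X_dvd_C_iff {R : Type*} [CommRing R] {c g : R} :
    Polynomial.C c * Polynomial.X ∣ Polynomial.C g ↔ g = 0 := by
  refine ⟨?_, fun hg ↦ by simp [hg]⟩
  rintro ⟨p, hp⟩
  simpa using congrArg (Polynomial.coeff · 0) hp

theorem C_mul_X_dvd_C_mul_X_pow_succ_iff {R : Type*} [CommRing R] {c g : R} (j : ℕ) :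
    Polynomial.C c * Polynomial.X ∣ Polynomial.C g * Polynomial.X ^ (j + 1) ↔ c ∣ g := by
  constructor
  · rintro ⟨p, hp⟩
    refine ⟨p.coeff j, ?_⟩
    simpa [mul_assoc, Polynomial.coeff_X_mul] using congrArg (Polynomial.coeff · (j + 1)) hp
  · exact fun hc ↦ mul_dvd_mul (map_dvd _ hc) (dvd_pow_self _ j.succ_ne_zero)

variable {k : Type u} {Γ : Type v} [CommRing k] [CommRing Γ] [Algebra k Γ] {f : Polynomial k}

/-- The ideal `(f(x), f'(x) z)` of `k[x, z]`, with `x = X 0` and `z = X 1`. -/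
def evenRelations (f : Polynomial k) : Ideal (MvPolynomial (Fin 2) k) :=
  Ideal.span {Polynomial.aeval (X 0) f, Polynomial.aeval (X 0) f.derivative * X 1}

/-- The part of `z`-degree `j` of a quotient of `k[x, z]`, with `x = X 0` and `z = X 1`: the span
of the monomials `x ^ i * z ^ j`. -/
def zDegree (I : Ideal (MvPolynomial (Fin 2) k)) (j : ℕ) :
    Submodule k (MvPolynomial (Fin 2) k ⧸ I) :=
  Submodule.span k ((fun i : ℕ ↦ Ideal.Quotient.mk I (X 0 ^ i * X 1 ^ j)) '' Set.univ)

/-- The `k`-algebra map from `Γ = k[x]/(f)` to `k[x, z]/(f(x), f'(x) z)` with `x ↦ x`. -/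
def evenCoeff (h : IsAdjoinRoot Γ f) : Γ →ₐ[k] MvPolynomial (Fin 2) k ⧸ evenRelations f :=
  h.liftHom (Ideal.Quotient.mk _ (X 0)) <| by
    rw [← Ideal.Quotient.mkₐ_eq_mk k, Polynomial.aeval_algHom_apply]
    exact Ideal.Quotient.eq_zero_iff_mem.2 (Ideal.subset_span (by simp))

theorem evenCoeff_map (h : IsAdjoinRoot Γ f) (p : Polynomial k) :
    evenCoeff h (h.map p) = Ideal.Quotient.mk _ (Polynomial.aeval (X 0) p) := by
  rw [evenCoeff, IsAdjoinRoot.liftHom_map, ← Ideal.Quotient.mkₐ_eq_mk k,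
    Polynomial.aeval_algHom_apply]

theorem evenCoeff_root (h : IsAdjoinRoot Γ f) :
    evenCoeff h h.root = Ideal.Quotient.mk _ (X 0) :=
  h.liftHom_root _

theorem mem_zDegree_iff (h : IsAdjoinRoot Γ f) (j : ℕ)
    {y : MvPolynomial (Fin 2) k ⧸ evenRelations f} :
    y ∈ zDegree _ j ↔ ∃ g : Γ, evenCoeff h g * Ideal.Quotient.mk _ (X 1) ^ j = y := by
  let L : Polynomial k →ₗ[k] MvPolynomial (Fin 2) k ⧸ evenRelations f :=
    LinearMap.mulRight k (Ideal.Quotient.mk _ (X 1) ^ j) ∘ₗ ((evenCoeff h).comp h.map).toLinearMap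
  have hL : zDegree (evenRelations f) j = L.range := by
    have hX : Submodule.span k (Set.range fun i : ℕ ↦ (Polynomial.X : Polynomial k) ^ i) = ⊤ := by
      simpa only [Polynomial.coe_basisMonomials, Polynomial.monomial_one_right_eq_X_pow] using
        (Polynomial.basisMonomials k).span_eq
    rw [zDegree, Set.image_univ, LinearMap.range_eq_map, ← hX, Submodule.map_span, ← Set.range_comp]
    congr! with i
    simp [L, evenCoeff_root]
  rw [hL]
  exact ((h.map_surjective).exists (p := fun g ↦ evenCoeff h g * _ = y)).symm

theorem aeval_aeval_X_zero (h : IsAdjoinRoot Γ f) (p : Polynomial k) :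
    aeval ![Polynomial.C h.root, Polynomial.X] (Polynomial.aeval (X 0 : MvPolynomial (Fin 2) k) p) =
      Polynomial.C (Polynomial.aeval h.root p) := by
  rw [← Polynomial.aeval_algHom_apply, aeval_X]
  exact Polynomial.aeval_algHom_apply (Polynomial.CAlgHom (R := k) (A := Γ)) h.root p

/-- The `k`-algebra map from `k[x, z]/(f(x), f'(x) z)` to `Γ[z]/(f'(x) z)`, where `Γ = k[x]/(f)`;
its target makes coefficients accessible. -/
def evenDetect (h : IsAdjoinRoot Γ f) : MvPolynomial (Fin 2) k ⧸ evenRelations f →ₐ[k]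
    Polynomial Γ ⧸ Ideal.span
      {Polynomial.C (Polynomial.aeval h.root f.derivative) * (Polynomial.X : Polynomial Γ)} :=
  Ideal.quotientMapₐ _ (aeval ![Polynomial.C h.root, Polynomial.X]) <| by
    rw [evenRelations, Ideal.span_le]
    rintro _ (rfl | rfl) <;> simp [aeval_aeval_X_zero h]

theorem evenDetect_evenCoeff_mul (h : IsAdjoinRoot Γ f) (g : Γ) (j : ℕ) :
    evenDetect h (evenCoeff h g * Ideal.Quotient.mk _ (X 1) ^ j) =
      Ideal.Quotient.mk _ (Polynomial.C g * Polynomial.X ^ j) := by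
  obtain ⟨p, rfl⟩ := h.map_surjective g
  rw [evenCoeff_map, ← map_pow, ← map_mul]
  refine congrArg (Ideal.Quotient.mk _) ?_
  change aeval _ (_ * _) = _
  simp [aeval_aeval_X_zero h, h.aeval_root_eq_map]

theorem evenCoeff_mul_pow_zero_eq_zero_iff (h : IsAdjoinRoot Γ f) {g : Γ} :
    evenCoeff h g * Ideal.Quotient.mk _ (X 1) ^ 0 = 0 ↔ g = 0 := by
  refine ⟨fun hg ↦ ?_, fun hg ↦ by simp [hg]⟩
  have := congrArg (evenDetect h) hg
  rwa [evenDetect_evenCoeff_mul, map_zero, Ideal.Quotient.eq_zero_iff_dvd, pow_zero, mul_one,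
    C_mul_X_dvd_C_iff] at this

theorem evenCoeff_mul_pow_succ_eq_zero_iff (h : IsAdjoinRoot Γ f) (j : ℕ) {g : Γ} :
    evenCoeff h g * Ideal.Quotient.mk _ (X 1) ^ (j + 1) = 0 ↔
      Polynomial.aeval h.root f.derivative ∣ g := by
  constructor
  · intro hg
    have := congrArg (evenDetect h) hg
    rwa [evenDetect_evenCoeff_mul, map_zero, Ideal.Quotient.eq_zero_iff_dvd,
      C_mul_X_dvd_C_mul_X_pow_succ_iff] at this
  · rintro ⟨c, rfl⟩
    have hz :
        evenCoeff h (Polynomial.aeval h.root f.derivative) * Ideal.Quotient.mk _ (X 1) = 0 := by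
      rw [h.aeval_root_eq_map, evenCoeff_map, ← map_mul]
      exact Ideal.Quotient.eq_zero_iff_mem.2 (Ideal.subset_span (by simp))
    rw [map_mul, pow_succ', mul_mul_mul_comm, hz, zero_mul]

end Target

theorem exists_addEquiv_of_eq_zero_iff {G H K σ : Type*} [AddGroup G] [AddGroup H] [AddGroup K]
    [SetLike σ K] [AddSubgroupClass σ K] {φ : G →+ H} {ψ : G →+ K} {S : σ}
    (hφ : Function.Surjective φ) (hψ : ∀ y, y ∈ S ↔ ∃ g, ψ g = y)
    (hker : ∀ g, φ g = 0 ↔ ψ g = 0) : ∃ e : H ≃+ S, ∀ g, (e (φ g) : K) = ψ g := by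
  let ψ' : G →+ S := ψ.codRestrict S fun g ↦ (hψ _).2 ⟨g, rfl⟩
  have hψ' : Function.Surjective ψ' := fun y ↦
    ((hψ y).1 y.2).imp fun g hg ↦ Subtype.ext hg
  have hφψ : φ.ker = ψ'.ker := by
    ext g
    rw [AddMonoidHom.mem_ker, AddMonoidHom.mem_ker, hker, Subtype.ext_iff]
    rfl
  refine ⟨(QuotientAddGroup.liftEquiv φ.ker hφ rfl).symm.trans
    (QuotientAddGroup.liftEquiv φ.ker hψ' hφψ), fun g ↦ ?_⟩
  rw [← QuotientAddGroup.liftEquiv_coe φ.ker hφ rfl, AddEquiv.trans_apply,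
    AddEquiv.symm_apply_apply, QuotientAddGroup.liftEquiv_coe]
  rfl

theorem smul_extPow_comp_smul_extPow {R : Type v} [CommRing R] {M : ModuleCat.{v} R}
    [HasExt.{w} (ModuleCat.{v} R)] {d : ℕ} (z : Ext M M d) (i j : ℕ) (r s : R) :
    (r • extPow z i).comp (s • extPow z j) (mul_add d i j).symm = (r * s) • extPow z (i + j) := by
  rw [Ext.smul_comp, Ext.comp_smul, extPow_comp_extPow z i j rfl, smul_smul]

theorem stmt13_general {k : Type u} {Γ : Type v} [CommRing k] [CommRing Γ] [Algebra k Γ]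
    {f : Polynomial k} (hΓ : IsAdjoinRootMonic Γ f) [Module (Γ ⊗[k] Γᵐᵒᵖ) Γ]
    (hbi : ∀ u v x : Γ, (u ⊗ₜ op v : Γ ⊗[k] Γᵐᵒᵖ) • x = u * x * v)
    [HasExt.{w} (ModuleCat.{v} (Γ ⊗[k] Γᵐᵒᵖ))] :
    ∃ e : ∀ j : ℕ, Ext (ModuleCat.of (Γ ⊗[k] Γᵐᵒᵖ) Γ) (ModuleCat.of (Γ ⊗[k] Γᵐᵒᵖ) Γ) (2 * j) ≃+
        zDegree (evenRelations f) j,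
      (e 0 (Ext.mk₀ (𝟙 (ModuleCat.of (Γ ⊗[k] Γᵐᵒᵖ) Γ))) :
        MvPolynomial (Fin 2) k ⧸ evenRelations f) = 1 ∧
      ∀ (i j : ℕ)
        (x : Ext (ModuleCat.of (Γ ⊗[k] Γᵐᵒᵖ) Γ) (ModuleCat.of (Γ ⊗[k] Γᵐᵒᵖ) Γ) (2 * i))
        (y : Ext (ModuleCat.of (Γ ⊗[k] Γᵐᵒᵖ) Γ) (ModuleCat.of (Γ ⊗[k] Γᵐᵒᵖ) Γ) (2 * j)),
        (e (i + j) (x.comp y (by ring)) : MvPolynomial (Fin 2) k ⧸ evenRelations f) =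
          e i x * e j y := by
  obtain ⟨z, hsurj, hzero, hsucc⟩ := exists_smul_extPow_eq_zero_iff hΓ hbi
  have hiso (j : ℕ) : ∃ e : Ext (ModuleCat.of (Γ ⊗[k] Γᵐᵒᵖ) Γ) (ModuleCat.of (Γ ⊗[k] Γᵐᵒᵖ) Γ)
      (2 * j) ≃+ zDegree (evenRelations f) j, ∀ r : Γ ⊗[k] Γᵐᵒᵖ,
      (e (r • extPow z j) : MvPolynomial (Fin 2) k ⧸ evenRelations f) =
        evenCoeff hΓ.toIsAdjoinRoot (envMul k Γ r) * Ideal.Quotient.mk _ (X 1) ^ j := by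
    refine exists_addEquiv_of_eq_zero_iff (S := zDegree (evenRelations f) j)
      (φ := (LinearMap.toSpanSingleton _ _ (extPow z j)).toAddMonoidHom)
      (ψ := (AddMonoidHom.mulRight _).comp
        ((evenCoeff hΓ.toIsAdjoinRoot).toRingHom.comp (envMul k Γ).toRingHom).toAddMonoidHom)
      (hsurj j) (fun y ↦ ?_) fun r ↦ ?_
    · rw [mem_zDegree_iff hΓ.toIsAdjoinRoot]
      exact (envMul_surjective k Γ).exists
    · cases j with
      | zero => exact (hzero r).trans (evenCoeff_mul_pow_zero_eq_zero_iff _).symm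
      | succ j => exact (hsucc j r).trans (evenCoeff_mul_pow_succ_eq_zero_iff _ j).symm
  choose e he using hiso
  refine ⟨e, ?_, fun i j x y ↦ ?_⟩
  · have h := he 0 1
    rw [one_smul, map_one, map_one, pow_zero, one_mul] at h
    exact h
  · obtain ⟨r, rfl⟩ := hsurj i x
    obtain ⟨s, rfl⟩ := hsurj j y
    simp only [smul_extPow_comp_smul_extPow, he, map_mul, pow_add]
    exact mul_mul_mul_comm _ _ _ _

/-- The structure of a ring with an adjoined root of the monic polynomial `f` on the ideal quotient
`k[x]/(f)`, for which `AdjoinRoot f` is a synonym with instances of its own. -/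
def quotientIsAdjoinRootMonic {k : Type u} [CommRing k] {f : Polynomial k} (hf : f.Monic) :
    IsAdjoinRootMonic (Polynomial k ⧸ Ideal.span {f}) f :=
  AdjoinRoot.isAdjoinRootMonic f hf

theorem evenRelations_X_pow (k : Type u) [CommRing k] (a : ℕ) :
    evenRelations (Polynomial.X ^ a : Polynomial k) =
      Ideal.span {X 0 ^ a, (a : MvPolynomial (Fin 2) k) * X 0 ^ (a - 1) * X 1} := by
  simp [evenRelations, Polynomial.derivative_X_pow]

set_option maxHeartbeats 1000000 in
set_option synthInstance.maxHeartbeats 1000000 in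
/-- Let `Γ = k[x]/(x^a)` with `a ≥ 2`.  Then the even Hochschild
cohomology ring of `Γ` is `HH^{2*}(Γ) ≅ k[x,z]/(x^a, a·x^{a-1}·z)` where `x` lies in
`HH^0` and `z` in `HH^2` (internal degrees `|x| = 1`, `|z| = 0` for the `ℤ`-grading of
`Γ` by `|x| = 1`): there is a family of additive isomorphisms from `HH^{2j}(Γ) =
Ext^{2j}_{Γᵉ}(Γ,Γ)` onto the `z`-degree-`j` component of the right-hand side, carrying
the identity to `1` and Yoneda composition to ring multiplication.  The `Γᵉ`-module
structure on `Γ` is the usual one, hypothesised via `hbi`. -/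
theorem stmt13 (k : Type) [Field k] (a : ℕ) (ha : 2 ≤ a)
    [Module (TruncEnv k a) (TruncPoly k a)]
    [IsScalarTower k (TruncEnv k a) (TruncPoly k a)]
    (hbi : ∀ u v x : TruncPoly k a,
      ((u ⊗ₜ op v : TruncEnv k a)) • x = u * x * v)
    [HasExt.{1} (ModuleCat.{0} (TruncEnv k a))] :
    ∃ e : ∀ j : ℕ,
        Ext (ModuleCat.of (TruncEnv k a) (TruncPoly k a))
          (ModuleCat.of (TruncEnv k a) (TruncPoly k a)) (2 * j) ≃+ hhTargetDeg k a j,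
      ((e 0 (Ext.mk₀ (𝟙 (ModuleCat.of (TruncEnv k a) (TruncPoly k a)))) : HHTarget k a)
          = 1) ∧
      (∀ (i j : ℕ) (x : Ext (ModuleCat.of (TruncEnv k a) (TruncPoly k a))
            (ModuleCat.of (TruncEnv k a) (TruncPoly k a)) (2 * i))
          (y : Ext (ModuleCat.of (TruncEnv k a) (TruncPoly k a))
            (ModuleCat.of (TruncEnv k a) (TruncPoly k a)) (2 * j)),
        ((e (i + j) (x.comp y (by ring)) : HHTarget k a)) =
          (e i x : HHTarget k a) * (e j y : HHTarget k a)) := by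
  have h := evenRelations_X_pow k a ▸
    stmt13_general (quotientIsAdjoinRootMonic (Polynomial.monic_X_pow a)) hbi
  exact h
end
end

section
/- Let Λ be a finite dimensional k-algebra and H a commutative Noetherian ring of cohomology operators for Λ. Then Ext^*_Λ(M, M') is finitely generated over H for all finitely generated Λ-modules M, M' if and only if Ext^*_Λ(Λ/Rad Λ, Λ/Rad Λ) is finitely generated over H. -/
noncomputable section

open CategoryTheory Abelian

variable (k : Type) [Field k] (Λ : Type) [Ring Λ] [Algebra k Λ]
variable [HasExt.{1} (ModuleCat.{0} Λ)]
variable (H : Type) [CommRing H] [Algebra k H] (ℋ : ℕ → Submodule k H)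
variable (φ : ∀ (M : ModuleCat.{0} Λ) (i : ℕ), ℋ i →+ Ext M M i)

/-- `Ext^*_Λ(M, M')` is a finitely generated `H`-module: finitely many homogeneous
elements generate it under the `H`-action (given by `h · x = φ_M(h) ∘ x`) together with
addition and subtraction. -/
def ExtFGOver (M M' : ModuleCat.{0} Λ) : Prop :=
  ∃ (d : ℕ) (g : Fin d → Σ m : ℕ, Ext M M' m),
    ∀ (n : ℕ) (x : Ext M M' n), x ∈ AddSubgroup.closure
      {y : Ext M M' n | ∃ (jj : Fin d) (i : ℕ) (h : ℋ i) (heq : i + (g jj).1 = n),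
        y = ((φ M i h).comp (g jj).2 heq)}

/-!
For fixed `N`, the modules `M` with `Ext^*(M, N)` finitely generated over `H` are closed under
retracts, and also under extensions: in a long exact sequence the middle term is finitely generated
once its neighbours are, because `H` is Noetherian. The same holds in the second variable. Over an
Artinian ring every simple module is a quotient of the semisimple module `Λ / Rad Λ`, hence a
retract of it, so induction on the composition length goes from `Λ / Rad Λ` to all finitely
generated modules, in one variable after the other.
-/

universe w v u

section GradedModule

open DirectSum

theorem directSumMap_exact {κ : Type*} {M N P : κ → Type*} [∀ n, AddCommMonoid (M n)]
    [∀ n, AddCommMonoid (N n)] [∀ n, AddCommMonoid (P n)] {f : ∀ n, M n →+ N n}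
    {g : ∀ n, N n →+ P n} (hfg : ∀ n, Function.Exact (f n) (g n)) :
    Function.Exact (DirectSum.map f) (DirectSum.map g) := by
  classical
  refine fun y => ⟨fun hy => ?_, ?_⟩
  · change y ∈ AddMonoidHom.mrange (DirectSum.map f)
    rw [← sum_support_of y]
    refine sum_mem fun n _ => ?_
    obtain ⟨x, hx⟩ := (hfg n (y n)).1 (DFunLike.congr_fun hy n)
    exact ⟨of M n x, (map_of f n x).trans (congrArg _ hx)⟩
  · rintro ⟨x, rfl⟩
    exact DFinsupp.ext fun n => (hfg n).apply_apply_eq_zero (x n)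

theorem finite_of_exact {R M N P : Type*} [Ring R] [IsNoetherianRing R] [AddCommGroup M]
    [AddCommGroup N] [AddCommGroup P] [Module R M] [Module R N] [Module R P]
    [Module.Finite R M] [Module.Finite R P] {f : M →ₗ[R] N} {g : N →ₗ[R] P}
    (hfg : Function.Exact f g) : Module.Finite R N :=
  have := isNoetherian_of_range_eq_ker f g (LinearMap.exact_iff.1 hfg).symm
  inferInstance

theorem isNoetherianRing_directSum {ι R σ : Type*} [DecidableEq ι] [AddMonoid ι] [Semiring R]
    [SetLike σ R] [AddSubmonoidClass σ R] (𝒜 : ι → σ) [GradedRing 𝒜] [IsNoetherianRing R] :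
    IsNoetherianRing (⨁ i, 𝒜 i) :=
  isNoetherianRing_of_ringEquiv R (DirectSum.decomposeRingEquiv 𝒜)

variable {ι κ : Type*} [AddMonoid ι] [VAdd ι κ]
variable {A : ι → Type*} {M N : κ → Type*}
variable [∀ i, AddCommGroup (A i)] [GRing A]
variable [∀ n, AddCommGroup (M n)] [Gmodule A M]
variable [∀ n, AddCommGroup (N n)] [Gmodule A N]

variable (A) in
/-- The degree `n` part of the graded `A`-submodule of `M` generated by a family `g` of
homogeneous elements. Homogeneous elements are terms of `GradedMonoid M`. -/
def homogeneousSpan {J : Type*} (g : J → GradedMonoid M) (n : κ) : AddSubgroup (M n) :=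
  AddSubgroup.closure {y | ∃ (j : J) (a : GradedMonoid A), GradedMonoid.mk n y = a • g j}

variable [DecidableEq κ]

theorem of_apply_mem_homogeneousSpan {J : Type*} (g : J → GradedMonoid M) (j : J)
    (a : GradedMonoid A) (n : κ) :
    of M (a • g j).1 (a • g j).2 n ∈ homogeneousSpan A g n := by
  by_cases h : (a • g j).1 = n
  · subst h
    rw [of_eq_same]
    exact AddSubgroup.subset_closure ⟨j, a, rfl⟩
  · rw [of_eq_of_ne _ _ _ (Ne.symm h)]
    exact zero_mem _

variable [DecidableEq ι]

theorem of_smul_of_gradedMonoid (a : GradedMonoid A) (x : GradedMonoid M) :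
    of A a.1 a.2 • of M x.1 x.2 = of M (a • x).1 (a • x).2 :=
  Gmodule.of_smul_of A M a.2 x.2

theorem of_mem_span_of_mem_homogeneousSpan {J : Type*} (g : J → GradedMonoid M) {n : κ} {y : M n}
    (hy : y ∈ homogeneousSpan A g n) :
    of M n y ∈ Submodule.span (⨁ i, A i) (Set.range fun j => of M (g j).1 (g j).2) := by
  induction hy using AddSubgroup.closure_induction with
  | mem y hy =>
    obtain ⟨j, a, hya⟩ := hy
    have hof : of M n y = of A a.1 a.2 • of M (g j).1 (g j).2 :=
      (of_eq_of_gradedMonoid_eq hya).trans (of_smul_of_gradedMonoid a (g j)).symm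
    exact hof ▸ Submodule.smul_mem _ _ (Submodule.subset_span ⟨j, rfl⟩)
  | zero => rw [map_zero]; exact zero_mem _
  | add x y _ _ hx hy => rw [map_add]; exact add_mem hx hy
  | neg x _ hx => rw [map_neg]; exact neg_mem hx

theorem mem_span_range_of_iff {J : Type*} (g : J → GradedMonoid M) (x : ⨁ n, M n) :
    x ∈ Submodule.span (⨁ i, A i) (Set.range fun j => of M (g j).1 (g j).2) ↔
      ∀ n, x n ∈ homogeneousSpan A g n := by
  classical
  constructor
  · intro hx n
    induction hx using Submodule.closure_induction with
    | zero => exact zero_mem _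
    | add x y _ _ hx hy => exact add_mem hx hy
    | smul_mem r x hx =>
      obtain ⟨j, rfl⟩ := hx
      induction r using DirectSum.induction_on with
      | zero => rw [zero_smul]; exact zero_mem _
      | add r s hr hs => rw [add_smul]; exact add_mem hr hs
      | of i a =>
        exact of_smul_of_gradedMonoid ⟨i, a⟩ (g j) ▸ of_apply_mem_homogeneousSpan g j ⟨i, a⟩ n
  · intro hx
    rw [← sum_support_of x]
    exact sum_mem fun n _ => of_mem_span_of_mem_homogeneousSpan g (hx n)

theorem span_range_of_eq_top_iff {J : Type*} (g : J → GradedMonoid M) :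
    Submodule.span (⨁ i, A i) (Set.range fun j => of M (g j).1 (g j).2) = ⊤ ↔
      ∀ n, homogeneousSpan A g n = ⊤ := by
  simp only [Submodule.eq_top_iff', AddSubgroup.eq_top_iff', mem_span_range_of_iff]
  refine ⟨fun h n x => ?_, fun h x n => h n (x n)⟩
  simpa only [of_eq_same] using h (of M n x) n

/-- A set of generators can be replaced by the finite set of its homogeneous components. -/
theorem finite_iff_exists_homogeneousSpan_eq_top :
    Module.Finite (⨁ i, A i) (⨁ n, M n) ↔
      ∃ (d : ℕ) (g : Fin d → GradedMonoid M), ∀ n, homogeneousSpan A g n = ⊤ := by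
  classical
  simp only [← span_range_of_eq_top_iff]
  constructor
  · intro
    obtain ⟨s, hs⟩ := Module.Finite.fg_top (R := ⨁ i, A i) (M := ⨁ n, M n)
    let component (p : Σ x : s, x.1.support) : GradedMonoid M := ⟨p.2, p.1.1 p.2⟩
    let e := (Fintype.equivFin (Σ x : s, x.1.support)).symm
    refine ⟨_, component ∘ e, eq_top_iff.2 (hs ▸ Submodule.span_le.2 fun x hx => ?_)⟩
    rw [SetLike.mem_coe, ← sum_support_of x]
    refine sum_mem fun n hn => Submodule.subset_span ?_
    obtain ⟨j, hj⟩ := e.surjective ⟨⟨x, hx⟩, ⟨n, hn⟩⟩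
    exact ⟨j, of_eq_of_gradedMonoid_eq (congrArg component hj)⟩
  · rintro ⟨d, g, hg⟩
    exact ⟨hg ▸ Submodule.fg_span (Set.finite_range _)⟩

/-- The linear map of total modules given by additive maps in each degree that commute with the
action of homogeneous scalars. -/
def totalMap (f : ∀ n, M n →+ N n)
    (hf : ∀ (i : ι) (n : κ) (a : A i) (x : M n),
      f (i +ᵥ n) (GradedMonoid.GSMul.smul a x) = GradedMonoid.GSMul.smul a (f n x)) :
    (⨁ n, M n) →ₗ[⨁ i, A i] ⨁ n, N n where
  __ := DirectSum.map f
  map_smul' r x := by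
    change DirectSum.map f (r • x) = r • DirectSum.map f x
    induction r using DirectSum.induction_on with
    | zero => simp only [zero_smul, map_zero]
    | add r s hr hs => simp only [add_smul, map_add, hr, hs]
    | of i a =>
      induction x using DirectSum.induction_on with
      | zero => simp only [smul_zero, map_zero]
      | add x y hx hy => simp only [smul_add, map_add, hx, hy]
      | of n x => rw [Gmodule.of_smul_of, map_of, map_of, Gmodule.of_smul_of, hf]

end GradedModule

section CohomologyOperators

open DirectSum

/-- A graded ring `A` of cohomology operators on an abelian category `C`: compatible graded ring
morphisms `act X : A → Ext^*(X, X)`, given degreewise, such that the two actions of `A` on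
`Ext^*(X, Y)`, through `X` and through `Y`, coincide. -/
class CohomologyOperators (A : ℕ → Type*) [∀ i, AddCommGroup (A i)] [GRing A]
    (C : Type u) [Category.{v} C] [Abelian C] [HasExt.{w} C] where
  act (X : C) (i : ℕ) : A i →+ Ext X X i
  act_one (X : C) : act X 0 GradedMonoid.GOne.one = Ext.mk₀ (𝟙 X)
  act_mul (X : C) {i j : ℕ} (a : A i) (b : A j) :
    act X (i + j) (GradedMonoid.GMul.mul a b) = (act X i a).comp (act X j b) rfl
  comp_act {X Y : C} {n i : ℕ} (a : A i) (x : Ext X Y n) :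
    x.comp (act Y i a) rfl = (act X i a).comp x (Nat.add_comm i n)

namespace CohomologyOperators

variable {A : ℕ → Type*} [∀ i, AddCommGroup (A i)] [GRing A]
variable {C : Type u} [Category.{v} C] [Abelian C] [HasExt.{w} C] [CohomologyOperators A C]

theorem mk_comp_eq_mk {X Y Z : C} {a b m n : ℕ} {x : Ext X Y a} {y : Ext Y Z b} {z : Ext X Z n}
    (hm : a + b = m) (hn : a + b = n) (hz : x.comp y hn = z) :
    (GradedMonoid.mk m (x.comp y hm) : GradedMonoid (Ext X Z)) = GradedMonoid.mk n z := by
  subst hm hn hz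
  rfl

instance (X Y : C) : Gmodule A (Ext X Y) where
  smul {i _} a x := (act X i a).comp x rfl
  one_smul := by
    rintro ⟨n, x⟩
    have h : (act X 0 (GradedMonoid.GOne.one : A 0)).comp x (zero_add n) = x := by
      rw [act_one, Ext.mk₀_id_comp]
    exact mk_comp_eq_mk _ _ h
  mul_smul := by
    rintro ⟨i, a⟩ ⟨j, b⟩ ⟨n, x⟩
    have h : (act X (i + j) (GradedMonoid.GMul.mul a b)).comp x (add_assoc i j n) =
        (act X i a).comp ((act X j b).comp x rfl) rfl := by
      rw [act_mul]
      exact Ext.comp_assoc _ _ _ rfl rfl (add_assoc i j n)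
    exact mk_comp_eq_mk _ _ h
  smul_add _ _ _ := Ext.comp_add _ _ _ _
  smul_zero _ := Ext.comp_zero _ _ _ _ _
  add_smul _ _ _ := by
    rw [map_add]
    exact Ext.add_comp _ _ _ _
  zero_smul _ := by
    rw [map_zero]
    exact Ext.zero_comp _ _ _ _ _

theorem mk_eq_smul_iff {X Y : C} {n : ℕ} {y : Ext X Y n} {a : GradedMonoid A}
    {x : GradedMonoid (Ext X Y)} :
    GradedMonoid.mk n y = a • x ↔ ∃ h : a.1 + x.1 = n, y = (act X a.1 a.2).comp x.2 h := by
  constructor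
  · intro h
    obtain ⟨rfl, h⟩ := Sigma.mk.inj_iff.1 h
    exact ⟨rfl, eq_of_heq h⟩
  · rintro ⟨rfl, rfl⟩
    rfl

theorem comp_act_eq {X Y : C} {n i m : ℕ} (a : A i) (x : Ext X Y n) (h : n + i = m) :
    x.comp (act Y i a) h = (act X i a).comp x ((Nat.add_comm i n).trans h) := by
  subst h
  exact comp_act a x

variable (A)

theorem homogeneousSpan_eq_closure_comp {X Y : C} {J : Type*} (g : J → GradedMonoid (Ext X Y))
    (n : ℕ) :
    homogeneousSpan A g n = AddSubgroup.closure {y | ∃ (j : J) (i : ℕ) (a : A i)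
      (h : i + (g j).1 = n), y = (act X i a).comp (g j).2 h} := by
  refine congrArg AddSubgroup.closure (Set.ext fun y => exists_congr fun j => ?_)
  exact ⟨fun ⟨a, ha⟩ => ⟨a.1, a.2, mk_eq_smul_iff.1 ha⟩,
    fun ⟨i, a, ha⟩ => ⟨⟨i, a⟩, mk_eq_smul_iff.2 ha⟩⟩

/-- The `A`-linear map `Ext^*(X, Y) → Ext^*(X, Z)` induced by `f : Y ⟶ Z`. -/
def postcompTotal (X : C) {Y Z : C} (f : Y ⟶ Z) :
    (⨁ n, Ext X Y n) →ₗ[⨁ i, A i] ⨁ n, Ext X Z n :=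
  totalMap (fun n => (Ext.mk₀ f).postcomp X (add_zero n)) fun _ _ _ _ =>
    Ext.comp_assoc_of_third_deg_zero _ _ _ _

/-- The `A`-linear map `Ext^*(Y, Z) → Ext^*(X, Z)` induced by `f : X ⟶ Y`. It is linear because the
two actions of `A` on `Ext^*(X, Y)` coincide. -/
def precompTotal {X Y : C} (f : X ⟶ Y) (Z : C) :
    (⨁ n, Ext Y Z n) →ₗ[⨁ i, A i] ⨁ n, Ext X Z n :=
  totalMap (fun n => (Ext.mk₀ f).precomp Z (zero_add n)) fun i n a x => by
    change (Ext.mk₀ f).comp ((act Y i a).comp x rfl) (zero_add (i + n)) =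
      (act X i a).comp ((Ext.mk₀ f).comp x (zero_add n)) rfl
    rw [← Ext.comp_assoc _ _ _ (zero_add i) rfl (by omega),
      ← Ext.comp_assoc _ _ _ (add_zero i) (zero_add n) (by omega), comp_act_eq]

/-- The objects `X` such that `Ext^*(X, Y)` is a finitely generated module over the total ring of
`A`. -/
def finiteExtTo (Y : C) : ObjectProperty C :=
  fun X => Module.Finite (⨁ i, A i) (⨁ n, Ext X Y n)

/-- The objects `Y` such that `Ext^*(X, Y)` is a finitely generated module over the total ring of
`A`. -/
def finiteExtFrom (X : C) : ObjectProperty C :=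
  fun Y => Module.Finite (⨁ i, A i) (⨁ n, Ext X Y n)

instance (Y : C) : (finiteExtTo A Y).IsStableUnderRetracts where
  of_retract {X X'} r hX' := by
    have : Module.Finite (⨁ i, A i) (⨁ n, Ext X' Y n) := hX'
    refine Module.Finite.of_surjective (precompTotal A r.i Y)
      ((DirectSum.map_surjective _).2 fun n x => ⟨(Ext.mk₀ r.r).comp x (zero_add n), ?_⟩)
    change (Ext.mk₀ r.i).comp ((Ext.mk₀ r.r).comp x (zero_add n)) (zero_add n) = x
    rw [Ext.mk₀_comp_mk₀_assoc, r.retract, Ext.mk₀_id_comp]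

instance (X : C) : (finiteExtFrom A X).IsStableUnderRetracts where
  of_retract {Y Y'} r hY' := by
    have : Module.Finite (⨁ i, A i) (⨁ n, Ext X Y' n) := hY'
    refine Module.Finite.of_surjective (postcompTotal A X r.r)
      ((DirectSum.map_surjective _).2 fun n x => ⟨x.comp (Ext.mk₀ r.i) (add_zero n), ?_⟩)
    change (x.comp (Ext.mk₀ r.i) (add_zero n)).comp (Ext.mk₀ r.r) (add_zero n) = x
    rw [Ext.comp_assoc_of_third_deg_zero, Ext.mk₀_comp_mk₀, r.retract, Ext.comp_mk₀_id]

theorem postcompTotal_exact (X : C) {S : ShortComplex C} (hS : S.ShortExact) :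
    Function.Exact (postcompTotal A X S.f) (postcompTotal A X S.g) :=
  directSumMap_exact fun n =>
    (ShortComplex.ab_exact_iff_function_exact _).1 (Ext.covariant_sequence_exact₂' X hS n)

theorem precompTotal_exact (Y : C) {S : ShortComplex C} (hS : S.ShortExact) :
    Function.Exact (precompTotal A S.g Y) (precompTotal A S.f Y) :=
  directSumMap_exact fun n =>
    (ShortComplex.ab_exact_iff_function_exact _).1 (Ext.contravariant_sequence_exact₂' hS Y n)

variable [IsNoetherianRing (⨁ i, A i)]

instance (Y : C) : (finiteExtTo A Y).IsClosedUnderExtensions where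
  prop_X₂_of_shortExact {S} hS h₁ h₃ := by
    have : Module.Finite (⨁ i, A i) (⨁ n, Ext S.X₁ Y n) := h₁
    have : Module.Finite (⨁ i, A i) (⨁ n, Ext S.X₃ Y n) := h₃
    exact finite_of_exact (precompTotal_exact A Y hS)

instance (X : C) : (finiteExtFrom A X).IsClosedUnderExtensions where
  prop_X₂_of_shortExact {S} hS h₁ h₃ := by
    have : Module.Finite (⨁ i, A i) (⨁ n, Ext X S.X₁ n) := h₁
    have : Module.Finite (⨁ i, A i) (⨁ n, Ext X S.X₃ n) := h₃
    exact finite_of_exact (postcompTotal_exact A X hS)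

end CohomologyOperators

end CohomologyOperators

section Devissage

variable {R : Type u} [Ring R]

theorem isSemisimpleModule_quotient_jacobson [IsArtinianRing R] :
    IsSemisimpleModule R (R ⧸ Ring.jacobson R) :=
  (IsArtinian.isSemisimpleModule_iff_jacobson R _).2 (Module.jacobson_quotient_jacobson R R)

theorem exists_surjective_of_isSimpleModule (S : Type*) [AddCommGroup S] [Module R S]
    [IsSimpleModule R S] : ∃ f : (R ⧸ Ring.jacobson R) →ₗ[R] S, Function.Surjective f := by
  have := IsSimpleModule.nontrivial R S
  obtain ⟨s, hs⟩ := exists_ne (0 : S)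
  refine ⟨Submodule.liftQ _ (LinearMap.toSpanSingleton R S s)
    (IsSemisimpleModule.jacobson_le_ker R R R S _), fun y => ?_⟩
  obtain ⟨r, hr⟩ := IsSimpleModule.toSpanSingleton_surjective R hs y
  exact ⟨Submodule.Quotient.mk r, hr⟩

theorem nonempty_retract_of_surjective {M N : ModuleCat.{u} R} [IsSemisimpleModule R M]
    (f : M →ₗ[R] N) (hf : Function.Surjective f) : Nonempty (Retract N M) := by
  obtain ⟨i, hi⟩ := IsSemisimpleModule.lifting_property f hf LinearMap.id
  exact ⟨⟨ModuleCat.ofHom i, ModuleCat.ofHom f, by rw [← ModuleCat.ofHom_comp, hi]; rfl⟩⟩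

theorem shortExact_subtype_mkQ {M : Type u} [AddCommGroup M] [Module R M] (N : Submodule R M) :
    (ShortComplex.mk (ModuleCat.ofHom N.subtype) (ModuleCat.ofHom N.mkQ)
      (by ext x; simp)).ShortExact :=
  ModuleCat.shortComplex_shortExact _ (LinearMap.exact_subtype_mkQ N) N.injective_subtype
    N.mkQ_surjective

theorem prop_of_isFiniteLength (P : ObjectProperty (ModuleCat.{u} R)) [P.IsStableUnderRetracts]
    [P.IsClosedUnderExtensions] [IsSemisimpleModule R (R ⧸ Ring.jacobson R)]
    (hP : P (ModuleCat.of R (R ⧸ Ring.jacobson R))) {M : Type u} [AddCommGroup M] [Module R M]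
    (hM : IsFiniteLength R M) : P (ModuleCat.of R M) := by
  have prop_of_surjective (N : Type u) [AddCommGroup N] [Module R N]
      (f : (R ⧸ Ring.jacobson R) →ₗ[R] N) (hf : Function.Surjective f) : P (ModuleCat.of R N) :=
    have ⟨r⟩ := nonempty_retract_of_surjective (M := ModuleCat.of R _) (N := ModuleCat.of R N) f hf
    P.prop_of_retract r hP
  induction hM with
  | of_subsingleton => exact prop_of_surjective _ 0 (Function.surjective_to_subsingleton _)
  | @of_simple_quotient M _ _ N _ _ ih =>
    obtain ⟨f, hf⟩ := exists_surjective_of_isSimpleModule (R := R) (M ⧸ N)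
    exact P.prop_X₂_of_shortExact (shortExact_subtype_mkQ N) ih (prop_of_surjective _ f hf)

theorem prop_of_finite [IsArtinianRing R] (P : ObjectProperty (ModuleCat.{u} R))
    [P.IsStableUnderRetracts] [P.IsClosedUnderExtensions]
    (hP : P (ModuleCat.of R (R ⧸ Ring.jacobson R))) (M : ModuleCat.{u} R) [Module.Finite R M] :
    P M :=
  have := isSemisimpleModule_quotient_jacobson (R := R)
  prop_of_isFiniteLength P hP
    (isFiniteLength_iff_isNoetherian_isArtinian.2 ⟨inferInstance, inferInstance⟩)

end Devissage

section Comparison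

open CohomologyOperators DirectSum

theorem finiteExtFrom_of_quotient_jacobson {R : Type u} [Ring R] [IsArtinianRing R]
    [HasExt.{w} (ModuleCat.{u} R)] (A : ℕ → Type*) [∀ i, AddCommGroup (A i)] [GRing A]
    [IsNoetherianRing (⨁ i, A i)] [CohomologyOperators A (ModuleCat.{u} R)]
    (h : finiteExtFrom A (ModuleCat.of R (R ⧸ Ring.jacobson R))
      (ModuleCat.of R (R ⧸ Ring.jacobson R)))
    (M N : ModuleCat.{u} R) [Module.Finite R M] [Module.Finite R N] : finiteExtFrom A M N :=
  prop_of_finite (finiteExtTo A N) (prop_of_finite (finiteExtFrom A _) h N) M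

variable {k Λ H ℋ} in
omit [Algebra k Λ] in
theorem extFGOver_act_iff [GradedAlgebra ℋ] [CohomologyOperators (fun i => ℋ i) (ModuleCat.{0} Λ)]
    (M M' : ModuleCat.{0} Λ) :
    ExtFGOver k Λ H ℋ (act (A := fun i => ℋ i)) M M' ↔ finiteExtFrom (fun i => ℋ i) M M' := by
  refine Iff.trans ?_ finite_iff_exists_homogeneousSpan_eq_top.symm
  simp only [homogeneousSpan_eq_closure_comp, AddSubgroup.eq_top_iff']
  rfl

end Comparison

omit [Algebra k Λ] in
theorem stmt19_general [IsArtinianRing Λ] [GradedAlgebra ℋ] [IsNoetherianRing H]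
    (hφone : ∀ (M : ModuleCat.{0} Λ) (h1 : (1 : H) ∈ ℋ 0),
      φ M 0 ⟨1, h1⟩ = Ext.mk₀ (𝟙 M))
    (hφmul : ∀ (M : ModuleCat.{0} Λ) (i j : ℕ) (x y : H) (hx : x ∈ ℋ i) (hy : y ∈ ℋ j)
      (hxy : x * y ∈ ℋ (i + j)),
      φ M (i + j) ⟨x * y, hxy⟩ = (φ M i ⟨x, hx⟩).comp (φ M j ⟨y, hy⟩) rfl)
    (hφcomm : ∀ (M M' : ModuleCat.{0} Λ) (n i : ℕ) (h : ℋ i) (x : Ext M M' n),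
      x.comp (φ M' i h) rfl = (φ M i h).comp x (Nat.add_comm i n)) :
    (∀ M M' : ModuleCat.{0} Λ, Module.Finite Λ M → Module.Finite Λ M' →
        ExtFGOver k Λ H ℋ φ M M') ↔
      ExtFGOver k Λ H ℋ φ
        (ModuleCat.of Λ (Λ ⧸ (Ideal.jacobson (⊥ : Ideal Λ))))
        (ModuleCat.of Λ (Λ ⧸ (Ideal.jacobson (⊥ : Ideal Λ)))) := by
  let : CohomologyOperators (fun i => ℋ i) (ModuleCat.{0} Λ) :=
    { act := φ
      act_one := fun M => hφone M _
      act_mul := fun M i j a b => hφmul M i j a b a.2 b.2 _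
      comp_act := fun a x => hφcomm _ _ _ _ a x }
  have := isNoetherianRing_directSum ℋ
  refine ⟨fun h => h _ _ inferInstance inferInstance, fun h M N _ _ => ?_⟩
  rw [Ideal.jacobson_bot] at h
  exact (extFGOver_act_iff M N).2 <|
    finiteExtFrom_of_quotient_jacobson _ ((extFGOver_act_iff _ _).1 h) M N

/-- Let `Λ` be a finite dimensional `k`-algebra and `H` a commutative
Noetherian (ℕ-graded, of finite type) ring of cohomology operators for `Λ`: for every
`M` there is a graded ring morphism `φ_M : H → Ext^*_Λ(M,M)`, and the two induced
`H`-actions on `Ext^*_Λ(M,M')` coincide.  Then `Ext^*_Λ(M,M')` is a finitely generated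
`H`-module for all finitely generated `Λ`-modules `M, M'` if and only if
`Ext^*_Λ(Λ/Rad Λ, Λ/Rad Λ)` is a finitely generated `H`-module. -/
theorem stmt19 [FiniteDimensional k Λ]
    [GradedAlgebra ℋ] [IsNoetherianRing H]
    (hft : ∀ i, FiniteDimensional k (ℋ i))
    -- `φ_M` is a morphism of graded rings
    (hφone : ∀ (M : ModuleCat.{0} Λ) (h1 : (1 : H) ∈ ℋ 0),
      φ M 0 ⟨1, h1⟩ = Ext.mk₀ (𝟙 M))
    (hφmul : ∀ (M : ModuleCat.{0} Λ) (i j : ℕ) (x y : H) (hx : x ∈ ℋ i) (hy : y ∈ ℋ j)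
      (hxy : x * y ∈ ℋ (i + j)),
      φ M (i + j) ⟨x * y, hxy⟩ = (φ M i ⟨x, hx⟩).comp (φ M j ⟨y, hy⟩) rfl)
    -- the two induced `H`-module structures on `Ext^*_Λ(M,M')` coincide
    (hφcomm : ∀ (M M' : ModuleCat.{0} Λ) (n i : ℕ) (h : ℋ i) (x : Ext M M' n),
      x.comp (φ M' i h) rfl = (φ M i h).comp x (Nat.add_comm i n)) :
    (∀ M M' : ModuleCat.{0} Λ, Module.Finite Λ M → Module.Finite Λ M' →
        ExtFGOver k Λ H ℋ φ M M') ↔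
      ExtFGOver k Λ H ℋ φ
        (ModuleCat.of Λ (Λ ⧸ (Ideal.jacobson (⊥ : Ideal Λ))))
        (ModuleCat.of Λ (Λ ⧸ (Ideal.jacobson (⊥ : Ideal Λ)))) :=
  have : IsArtinianRing Λ := isArtinian_of_tower k inferInstance
  stmt19_general k Λ H ℋ φ hφone hφmul hφcomm
end
end
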